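/- Let Q² = 0 with H = QQ† + Q†Q on a finite-dimensional complex inner product space, and P a self-adjoint involution anticommuting with Q. Then the Witten index tr(P restricted-to-nothing) := tr(P e^{−βH}) is independent of β and equals dim(ker H ∩ V⁺) − dim(ker H ∩ V⁻), where V± are the ±1 eigenspaces of P. Equivalently, tr(P) = dim(ker H ∩ V⁺) − dim(ker H ∩ V⁻). -/

import Mathlib

/-- Rank-nullity for the restriction of `D` to a subspace `W`. -/
theorem witten_rank_nullity {V : Type*} [AddCommGroup V] [Module ℂ V] [FiniteDimensional ℂ V]
    (D : V →ₗ[ℂ] V) (W : Submodule ℂ V) :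
    Module.finrank ℂ ↥(W.map D) + Module.finrank ℂ ↥(LinearMap.ker D ⊓ W) =
      Module.finrank ℂ W := by
  have h := LinearMap.finrank_range_add_finrank_ker (D ∘ₗ W.subtype)
  rw [LinearMap.range_comp, Submodule.range_subtype, LinearMap.ker_comp] at h
  rw [← h, inf_comm, ← Submodule.map_comap_subtype, Submodule.finrank_map_subtype_eq]

theorem witten_rank_le {V : Type*} [AddCommGroup V] [Module ℂ V] [FiniteDimensional ℂ V]
    (D : V →ₗ[ℂ] V) (hD : ∀ x, D (D x) = 0 → D x = 0) (A B : Submodule ℂ V)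
    (hAB : A.map D ≤ B) :
    Module.finrank ℂ ↥(A.map D) ≤ Module.finrank ℂ ↥(B.map D) := by
  have h := witten_rank_nullity D (A.map D)
  have h0 : LinearMap.ker D ⊓ A.map D = ⊥ := by
    rw [eq_bot_iff]
    rintro _ ⟨hx, ⟨x, _, rfl⟩⟩
    exact hD x hx
  rw [h0, finrank_bot, add_zero] at h
  rw [← h]
  exact Submodule.finrank_mono (Submodule.map_mono hAB)

theorem witten_trace {V : Type*} [AddCommGroup V] [Module ℂ V] [FiniteDimensional ℂ V]
    (P : V →ₗ[ℂ] V) (hP2 : ∀ x, P (P x) = x) :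
    LinearMap.trace ℂ V P = (Module.finrank ℂ ↥(Module.End.eigenspace P 1) : ℂ)
      - (Module.finrank ℂ ↥(Module.End.eigenspace P (-1)) : ℂ) := by
  have h1 : LinearMap.IsProj (Module.End.eigenspace P 1)
      ((1/2 : ℂ) • (LinearMap.id + P)) := by
    constructor
    · intro x
      rw [Module.End.mem_eigenspace_iff]
      simp only [LinearMap.smul_apply, LinearMap.add_apply, LinearMap.id_apply, map_smul,
        map_add, hP2]
      module
    · intro x hx
      rw [Module.End.mem_eigenspace_iff] at hx
      simp only [LinearMap.smul_apply, LinearMap.add_apply, LinearMap.id_apply, hx]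
      module
  have h2 : LinearMap.IsProj (Module.End.eigenspace P (-1))
      ((1/2 : ℂ) • (LinearMap.id - P)) := by
    constructor
    · intro x
      rw [Module.End.mem_eigenspace_iff]
      simp only [LinearMap.smul_apply, LinearMap.sub_apply, LinearMap.id_apply, map_smul,
        map_sub, hP2]
      module
    · intro x hx
      rw [Module.End.mem_eigenspace_iff] at hx
      simp only [LinearMap.smul_apply, LinearMap.sub_apply, LinearMap.id_apply, hx]
      module
  rw [← h1.trace, ← h2.trace, ← map_sub]
  congr 1
  module

/-- Witten index: for `Q² = 0`, `H = QQ† + Q†Q`, and a self-adjoint involution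
`P` anticommuting with `Q`,
`tr(P) = dim(ker H ∩ V⁺) − dim(ker H ∩ V⁻)` where `V±` are the `±1`
eigenspaces of `P`. -/
theorem witten_index_eq_trace_parity
    {V : Type*} [NormedAddCommGroup V] [InnerProductSpace ℂ V]
    [FiniteDimensional ℂ V]
    (Q H P : V →ₗ[ℂ] V) (hQ : Q ∘ₗ Q = 0)
    (hH : H = Q ∘ₗ LinearMap.adjoint Q + LinearMap.adjoint Q ∘ₗ Q)
    (hP : LinearMap.adjoint P = P) (hP2 : P ∘ₗ P = LinearMap.id)
    (hPQ : P ∘ₗ Q + Q ∘ₗ P = 0) :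
    LinearMap.trace ℂ V P =
      (Module.finrank ℂ ↥(LinearMap.ker H ⊓ Module.End.eigenspace P 1) : ℂ)
      - (Module.finrank ℂ ↥(LinearMap.ker H ⊓ Module.End.eigenspace P (-1)) : ℂ) := by
  have hQa : LinearMap.adjoint Q ∘ₗ LinearMap.adjoint Q = 0 := by
    rw [← LinearMap.adjoint_comp, hQ, map_zero]
  have hPQa : LinearMap.adjoint Q ∘ₗ P + P ∘ₗ LinearMap.adjoint Q = 0 := by
    have := congrArg LinearMap.adjoint hPQ
    rwa [map_add, LinearMap.adjoint_comp, LinearMap.adjoint_comp, hP, map_zero] at this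
  obtain ⟨D, hDdef⟩ : ∃ D, D = Q + LinearMap.adjoint Q := ⟨_, rfl⟩
  have hDa : LinearMap.adjoint D = D := by
    rw [hDdef, map_add, LinearMap.adjoint_adjoint, add_comm]
  have hDD : H = D ∘ₗ D := by
    rw [hH, hDdef, LinearMap.add_comp, LinearMap.comp_add, LinearMap.comp_add, hQ, hQa]
    abel
  have hD : ∀ x, D (D x) = 0 → D x = 0 := by
    intro x hx
    rw [← inner_self_eq_zero (𝕜 := ℂ), ← LinearMap.adjoint_inner_left, hDa, hx,
      inner_zero_left]
  have hker : LinearMap.ker H = LinearMap.ker D := by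
    ext x
    rw [LinearMap.mem_ker, LinearMap.mem_ker, hDD, LinearMap.comp_apply]
    exact ⟨hD x, fun h => by rw [h, map_zero]⟩
  have hPD : ∀ x, P (D x) = - D (P x) := by
    intro x
    have e1 := LinearMap.congr_fun hPQ x
    have e2 := LinearMap.congr_fun hPQa x
    simp only [LinearMap.add_apply, LinearMap.comp_apply, LinearMap.zero_apply] at e1 e2
    rw [hDdef, LinearMap.add_apply, LinearMap.add_apply, map_add, eq_neg_of_add_eq_zero_left e1,
      eq_neg_of_add_eq_zero_right e2]
    abel
  have hmap : ∀ c : ℂ, (Module.End.eigenspace P c).map D ≤ Module.End.eigenspace P (-c) := by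
    rintro c _ ⟨x, hx, rfl⟩
    have hx' : P x = c • x := Module.End.mem_eigenspace_iff.1 hx
    rw [Module.End.mem_eigenspace_iff, hPD, hx', map_smul, neg_smul]
  have l1 := witten_rank_le D hD _ _ (hmap 1)
  have l2 := witten_rank_le D hD _ _ (hmap (-1))
  rw [neg_neg] at l2
  have r1 := witten_rank_nullity D (Module.End.eigenspace P 1)
  have r2 := witten_rank_nullity D (Module.End.eigenspace P (-1))
  rw [witten_trace P (fun x => LinearMap.congr_fun hP2 x), hker, ← r1, ← r2, le_antisymm l1 l2]
  push_cast
  ring
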